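/- For any n > 1, any compact polynomially convex set K ⊆ ℂⁿ, and any point p ∈ ℂⁿ \ K, there exists an injective holomorphic map φ : ℂⁿ → ℂⁿ with φ(0) = p whose image is disjoint from K. In particular, p lies in a Fatou–Bieberbach domain contained in ℂⁿ \ K. -/

import Mathlib

noncomputable section
open Set Metric MvPolynomial

/-- The polynomially convex hull of a set in `ℂⁿ`. -/
def polyHull {n : ℕ} (K : Set (EuclideanSpace ℂ (Fin n))) : Set (EuclideanSpace ℂ (Fin n)) :=
  {z | ∀ p : MvPolynomial (Fin n) ℂ,
    ‖eval (fun i => z i) p‖ ≤ sSup ((fun w => ‖eval (fun i => w i) p‖) '' K)}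

/-- A compact set in `ℂⁿ` is polynomially convex if it equals its polynomial hull. -/
def IsPolyConvex {n : ℕ} (K : Set (EuclideanSpace ℂ (Fin n))) : Prop :=
  polyHull K = K

/-- Polynomial hull for subsets of a product `ℂᴺ × ℂⁿ ≅ ℂ^{N+n}`, using polynomials in the
`N + n` coordinates. -/
def polyHull2 {N n : ℕ} (S : Set (EuclideanSpace ℂ (Fin N) × EuclideanSpace ℂ (Fin n))) :
    Set (EuclideanSpace ℂ (Fin N) × EuclideanSpace ℂ (Fin n)) :=
  {z | ∀ p : MvPolynomial (Fin N ⊕ Fin n) ℂ,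
    ‖eval (Sum.elim (fun i => z.1 i) (fun j => z.2 j)) p‖ ≤
      sSup ((fun w => ‖eval (Sum.elim (fun i => w.1 i) (fun j => w.2 j)) p‖) '' S)}

def IsPolyConvex2 {N n : ℕ} (S : Set (EuclideanSpace ℂ (Fin N) × EuclideanSpace ℂ (Fin n))) :
    Prop :=
  polyHull2 S = S

section PushOut
open Filter Topology

variable {E : Type*} [NormedAddCommGroup E] [NormedSpace ℂ E]

/-- A bijection of a complex normed space that is holomorphic together with its inverse. -/
def IsBiholo (e : E ≃ E) : Prop := Differentiable ℂ e ∧ Differentiable ℂ e.symm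

theorem IsBiholo.refl : IsBiholo (Equiv.refl E) := ⟨differentiable_id, differentiable_id⟩

theorem IsBiholo.trans {e e' : E ≃ E} (he : IsBiholo e) (he' : IsBiholo e') :
    IsBiholo (e.trans e') := ⟨he'.1.comp he.1, he.2.comp he'.2⟩

/-- The shear `z ↦ z + h (β z) • v` in a direction `v` of the kernel of `β`. -/
def shear (h : ℂ → ℂ) (β : E →L[ℂ] ℂ) (v : E) (hv : β v = 0) : E ≃ E where
  toFun z := z + h (β z) • v
  invFun z := z - h (β z) • v
  left_inv z := by simp [hv]
  right_inv z := by simp [hv]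

theorem isBiholo_shear {h : ℂ → ℂ} (hh : Differentiable ℂ h) (β : E →L[ℂ] ℂ) (v : E)
    (hv : β v = 0) : IsBiholo (shear h β v hv) :=
  ⟨differentiable_id.add ((hh.comp β.differentiable).smul_const v),
    differentiable_id.sub ((hh.comp β.differentiable).smul_const v)⟩

theorem norm_fderiv_le_of_forall_norm_le {f : E → E} (hf : Differentiable ℂ f) {x : E} {C : ℝ}
    (hC0 : 0 ≤ C) (hC : ∀ y, ‖y - x‖ ≤ 1 → ‖f y‖ ≤ C) : ‖fderiv ℂ f x‖ ≤ C := by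
  refine ContinuousLinearMap.opNorm_le_of_unit_norm (𝕜 := ℂ) hC0 fun u hu => ?_
  have hline : HasDerivAt (fun t : ℂ => f (x + t • u)) (fderiv ℂ f x u) 0 := by
    have h1 : HasDerivAt (fun t : ℂ => x + t • u) u 0 := by
      simpa using ((hasDerivAt_id (0 : ℂ)).smul_const u).const_add x
    have h2 : HasFDerivAt f (fderiv ℂ f x) (x + (0 : ℂ) • u) := by
      simpa using (hf x).hasFDerivAt
    exact h2.comp_hasDerivAt 0 h1
  rw [← hline.deriv]
  have hd : Differentiable ℂ fun t : ℂ => f (x + t • u) := by fun_prop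
  have := Complex.norm_deriv_le_of_forall_mem_sphere_norm_le (c := 0) (R := 1) (C := C)
    one_pos hd.diffContOnCl (fun t ht => hC _ (by
      have : ‖t‖ = 1 := by simpa using ht
      simp [norm_smul, hu, this]))
  simpa using this

theorem exists_differentiable_limit [CompleteSpace E] {F : ℕ → E → E}
    (hF : ∀ k, Differentiable ℂ (F k))
    (hb : ∀ k : ℕ, ∀ z, ‖z‖ ≤ k → ‖F (k + 1) z - F k z‖ ≤ (1 / 2) ^ k) :
    ∃ φ : E → E, Differentiable ℂ φ ∧ ∀ z, Tendsto (fun k => F k z) atTop (𝓝 (φ z)) := by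
  have hsum : ∀ m : ℕ, Summable fun j : ℕ => ((1 : ℝ) / 2) ^ (m + j) := fun m => by
    simp_rw [pow_add]
    exact (summable_geometric_of_lt_one (by norm_num) (by norm_num)).mul_left _
  have hterm : ∀ (m : ℕ) (z : E), ‖z‖ ≤ m →
      Summable fun j : ℕ => F (m + j + 1) z - F (m + j) z := fun m z hz =>
    Summable.of_norm_bounded (hsum m) fun j =>
      hb _ _ (by push_cast; linarith [j.cast_nonneg (α := ℝ)])
  have hlim : ∀ (m : ℕ) (z : E), ‖z‖ ≤ m → Tendsto (fun k => F k z) atTop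
      (𝓝 (F m z + ∑' j : ℕ, (F (m + j + 1) z - F (m + j) z))) := fun m z hz => by
    have h1 := (hterm m z hz).hasSum.tendsto_sum_nat.const_add (F m z)
    refine (tendsto_add_atTop_iff_nat m).1 (h1.congr fun k => ?_)
    have := Finset.sum_range_sub (fun j => F (m + j) z) k
    simp only [← add_assoc] at this
    rw [this]
    simp [add_comm]
  refine ⟨fun z => limUnder atTop fun k => F k z, fun z₀ => ?_, fun z => ?_⟩
  · obtain ⟨m, hm⟩ := exists_nat_ge (‖z₀‖ + 2)
    have hball : ∀ x ∈ ball (0 : E) (m - 1), ‖x‖ ≤ (m : ℝ) - 1 := fun x hx =>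
      (mem_ball_zero_iff.1 hx).le
    have hz₀ : z₀ ∈ ball (0 : E) (m - 1) := mem_ball_zero_iff.2 (by linarith)
    have hd := hasFDerivAt_tsum_of_isPreconnected (𝕜 := ℂ) (hsum m)
      (f := fun j z => F (m + j + 1) z - F (m + j) z)
      (f' := fun j z => fderiv ℂ (fun z => F (m + j + 1) z - F (m + j) z) z)
      isOpen_ball (convex_ball (0 : E) (m - 1)).isPreconnected
      (fun j x _ => (((hF _).sub (hF _)) x).hasFDerivAt)
      (fun j x hx => norm_fderiv_le_of_forall_norm_le ((hF _).sub (hF _)) (by positivity)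
        fun y hy => hb _ _ (by
          have := hball x hx
          have := norm_le_insert' y x
          push_cast; linarith [j.cast_nonneg (α := ℝ)]))
      hz₀ (hterm m z₀ (by linarith)) hz₀
    refine DifferentiableAt.congr_of_eventuallyEq ((hF m z₀).add hd.differentiableAt) ?_
    filter_upwards [isOpen_ball.mem_nhds hz₀] with z hz
    exact (hlim m z (by linarith [hball z hz])).limUnder_eq
  · obtain ⟨m, hm⟩ := exists_nat_ge ‖z‖
    exact tendsto_nhds_limUnder ⟨_, hlim m z hm⟩

/-- Moving a compact set by one shear, far away in the direction `v`, while staying close to the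
identity on the tube `‖β z‖ ≤ R`. -/
theorem exists_shear_pushing {K : Set E} (hK : IsCompact K) (β β' : E →L[ℂ] ℂ) (v : E)
    (hv : β v = 0) (hv' : β' v = 1) {R : ℝ} (hR : 0 ≤ R) (hKR : ∀ z ∈ K, R < ‖β z‖) (R' : ℝ)
    {ε : ℝ} (hε : 0 < ε) :
    ∃ G : E ≃ E, IsBiholo G ∧ G 0 = 0 ∧ (∀ z, ‖β z‖ ≤ R → ‖G.symm z - z‖ ≤ ε) ∧
      ∀ z ∈ K, R' < ‖β' (G z)‖ := by
  have hgap : ∀ r, (∀ z ∈ K, r < ‖β z‖) → ∃ r', r < r' ∧ ∀ z ∈ K, r' < ‖β z‖ := by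
    intro r hr
    rcases K.eq_empty_or_nonempty with rfl | hne
    · exact ⟨r + 1, by linarith, by simp⟩
    obtain ⟨x, hx, hmin⟩ := hK.exists_isMinOn hne (f := fun z => ‖β z‖) (by fun_prop)
    obtain ⟨r', h1, h2⟩ := exists_between (hr x hx)
    exact ⟨r', h1, fun z hz => h2.trans_le (hmin hz)⟩
  obtain ⟨R₁, hR₁, hKR₁⟩ := hgap R hKR
  obtain ⟨R₂, hR₂, hKR₂⟩ := hgap R₁ hKR₁
  have hR₁0 : 0 < R₁ := hR.trans_lt hR₁
  obtain ⟨B, hB⟩ := hK.exists_bound_of_continuousOn (f := fun z => β' z) (by fun_prop)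
  have ht1 : Tendsto (fun N : ℕ => (R / R₁) ^ N * ‖v‖) atTop (𝓝 (0 * ‖v‖)) :=
    (tendsto_pow_atTop_nhds_zero_of_lt_one (by positivity) ((div_lt_one hR₁0).2 hR₁)).mul_const _
  rw [zero_mul] at ht1
  have ht2 : Tendsto (fun N : ℕ => (R₂ / R₁) ^ N) atTop atTop :=
    tendsto_pow_atTop_atTop_of_one_lt ((one_lt_div hR₁0).2 hR₂)
  obtain ⟨N, hN1, hN2, hN0⟩ := ((ht1.eventually (gt_mem_nhds hε)).and
    ((ht2.eventually_gt_atTop (R' + B)).and (eventually_gt_atTop 0))).exists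
  have hR₁' : ‖(R₁ : ℂ)‖ = R₁ := by simp [hR₁0.le]
  refine ⟨shear (fun w => (w / R₁) ^ N) β v hv, isBiholo_shear (by fun_prop) β v hv, ?_, ?_, ?_⟩
  · simp [shear, hN0.ne']
  · intro z hz
    have : ‖(β z / R₁) ^ N • v‖ ≤ (R / R₁) ^ N * ‖v‖ := by
      rw [norm_smul, norm_pow, norm_div, hR₁']
      gcongr
    simpa [shear] using this.trans hN1.le
  · intro z hz
    have h1 : β' (shear (fun w => (w / R₁) ^ N) β v hv z) = β' z + (β z / R₁) ^ N := by
      simp [shear, hv']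
    have h2 : (R₂ / R₁) ^ N ≤ ‖(β z / R₁) ^ N‖ := by
      rw [norm_pow, norm_div, hR₁']
      have := (hKR₂ z hz).le
      have : 0 ≤ R₂ := by linarith
      gcongr
    have h3 := norm_sub_le (β' z + (β z / R₁) ^ N) (β' z)
    have h4 := hB z hz
    rw [add_sub_cancel_left] at h3
    rw [h1]
    linarith

theorem exists_injective_avoiding_of_alternating [ProperSpace E] {K : Set E} (hK : IsCompact K)
    (β : ℕ → E →L[ℂ] ℂ) (v : ℕ → E) (h0 : ∀ k, β k (v (k + 1)) = 0)
    (h1 : ∀ k, β (k + 1) (v (k + 1)) = 1) {D : ℝ} (hD : ∀ k, ‖β k‖ ≤ D)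
    (hβ : ∀ z ∈ K, β 0 z ≠ 0) :
    ∃ φ : E → E, Differentiable ℂ φ ∧ Function.Injective φ ∧ φ 0 = 0 ∧ ∀ z, φ z ∉ K := by
  have hD0 : 0 ≤ D := (norm_nonneg _).trans (hD 0)
  let P : ℕ → (E ≃ E) → Prop := fun k e =>
    IsBiholo e ∧ e 0 = 0 ∧ ∀ z ∈ K, k * D < ‖β k (e z)‖
  let Q : ℕ → (E ≃ E) → (E ≃ E) → Prop := fun k e e' => ∀ z : E, ‖z‖ ≤ k →
    ‖e'.symm z - e.symm z‖ ≤ (1 / 2) ^ k ∧ ‖e (e'.symm z) - z‖ ≤ (1 / 2) ^ (k + 1)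
  have hstep : ∀ k e, P k e → ∃ e', P (k + 1) e' ∧ Q k e e' := by
    rintro k e ⟨he, he0, heK⟩
    have hcont : Continuous e.symm := he.2.continuous
    obtain ⟨δ, hδ, hunif⟩ := Metric.uniformContinuousOn_iff_le.1
      ((isCompact_closedBall (0 : E) (k + 1)).uniformContinuousOn_of_continuous
        hcont.continuousOn) ((1 / 2) ^ k) (by positivity)
    obtain ⟨G, hG, hG0, hGid, hGK⟩ := exists_shear_pushing (hK.image he.1.continuous) (β k)
      (β (k + 1)) (v (k + 1)) (h0 k) (h1 k) (R := k * D) (by positivity)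
      (by rintro _ ⟨z, hz, rfl⟩; exact heK z hz) ((k + 1 : ℕ) * D)
      (ε := min δ ((1 / 2) ^ (k + 1))) (by positivity)
    refine ⟨e.trans G, ⟨he.trans hG, by simp [he0, hG0],
      fun z hz => hGK _ (mem_image_of_mem e hz)⟩, fun z hz => ?_⟩
    have hz' := hGid z (((β k).le_opNorm z).trans (by
      rw [mul_comm]; exact mul_le_mul hz (hD k) (norm_nonneg _) (by positivity)))
    have hle : ‖G.symm z - z‖ ≤ 1 :=
      hz'.trans ((min_le_right _ _).trans (pow_le_one₀ (by norm_num) (by norm_num)))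
    refine ⟨?_, by simpa using hz'.trans (min_le_right _ _)⟩
    have := hunif (G.symm z) (by
      have := norm_le_insert' (G.symm z) z
      simp; linarith) z (by simp; linarith) (by
        rw [dist_eq_norm]; exact hz'.trans (min_le_left _ _))
    simpa [dist_eq_norm] using this
  choose! next hnext using hstep
  let e : ℕ → E ≃ E := fun k => Nat.rec (Equiv.refl E) next k
  have hP : ∀ k, P k (e k) := fun k => by
    induction k with
    | zero => exact ⟨IsBiholo.refl, rfl, fun z hz => by simpa [e] using hβ z hz⟩
    | succ k ih => exact (hnext k _ ih).1
  have hQ : ∀ k, Q k (e k) (e (k + 1)) := fun k => (hnext k _ (hP k)).2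
  obtain ⟨φ, hφ, hlim⟩ := exists_differentiable_limit (F := fun k => (e k).symm)
    (fun k => (hP k).1.2) fun k z hz => (hQ k z hz).1
  have hclose : ∀ (d k : ℕ) (z : E), ‖z‖ + 1 ≤ k →
      ‖e k ((e (k + d)).symm z) - z‖ ≤ (1 / 2) ^ k := by
    intro d
    induction d with
    | zero => intro k z _; simp
    | succ d ih =>
      intro k z hz
      have hw := ih (k + 1) z (by push_cast; linarith)
      rw [show k + 1 + d = k + (d + 1) by ring] at hw
      set w := e (k + 1) ((e (k + (d + 1))).symm z) with hwdef
      have hw1 : ‖w - z‖ ≤ 1 := hw.trans (pow_le_one₀ (by norm_num) (by norm_num))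
      have hH := (hQ k w (by have := norm_le_insert' w z; linarith)).2
      rw [hwdef, Equiv.symm_apply_apply, ← hwdef] at hH
      calc _ ≤ _ := norm_sub_le_norm_sub_add_norm_sub _ w _
        _ ≤ (1 / 2) ^ (k + 1) + (1 / 2) ^ (k + 1) := add_le_add hH hw
        _ = _ := by ring
  have hinv : ∀ (k : ℕ) (z : E), ‖z‖ + 1 ≤ k → ‖e k (φ z) - z‖ ≤ (1 / 2) ^ k := by
    intro k z hz
    have h2 : Tendsto (fun d => (e (k + d)).symm z) atTop (𝓝 (φ z)) := by
      simpa [add_comm] using (tendsto_add_atTop_iff_nat k).2 (hlim z)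
    have h3 := ((((hP k).1.1.continuous.tendsto (φ z)).comp h2).sub_const z).norm
    exact le_of_tendsto h3 (Eventually.of_forall fun d => hclose d k z hz)
  refine ⟨φ, hφ, fun z w hzw => ?_, ?_, fun z hz => ?_⟩
  · have ht : Tendsto (fun k : ℕ => ((1 : ℝ) / 2) ^ k + (1 / 2) ^ k) atTop (𝓝 (0 + 0)) :=
      (tendsto_pow_atTop_nhds_zero_of_lt_one (by norm_num) (by norm_num)).add
        (tendsto_pow_atTop_nhds_zero_of_lt_one (by norm_num) (by norm_num))
    have hle : ‖z - w‖ ≤ 0 + 0 := by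
      refine ge_of_tendsto ht ?_
      filter_upwards [tendsto_natCast_atTop_atTop.eventually_ge_atTop (‖z‖ + 1),
        tendsto_natCast_atTop_atTop.eventually_ge_atTop (‖w‖ + 1)] with k hk hk'
      have hz := hinv k z hk
      have hw := hinv k w hk'
      rw [← hzw] at hw
      rw [norm_sub_rev] at hz
      exact (norm_sub_le_norm_sub_add_norm_sub _ (e k (φ z)) _).trans (add_le_add hz hw)
    exact sub_eq_zero.1 (norm_le_zero_iff.1 (by simpa using hle))
  · refine tendsto_nhds_unique (hlim 0) (tendsto_const_nhds.congr fun k => ?_)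
    rw [eq_comm, Equiv.symm_apply_eq, (hP k).2.1]
  · obtain ⟨k, hk⟩ := exists_nat_ge (‖z‖ + 1)
    have hb1 := (hP k).2.2 _ hz
    have hb2 := hinv k z hk
    have hb3 : ‖e k (φ z)‖ ≤ k := by
      have := norm_le_insert' (e k (φ z)) z
      have := pow_le_one₀ (n := k) (show (0 : ℝ) ≤ 1 / 2 by norm_num) (by norm_num)
      linarith
    have hb4 := ((β k).le_opNorm (e k (φ z))).trans
      (mul_le_mul (hD k) hb3 (norm_nonneg _) hD0)
    linarith

/-- A nonzero functional on a space of dimension at least two extends to a dual pair. -/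
theorem exists_dual_pair (hE : 1 < Module.finrank ℂ E) {β : E →L[ℂ] ℂ} {u : E} (hu : β u = 1) :
    ∃ (v : E) (γ : E →L[ℂ] ℂ), β v = 0 ∧ γ v = 1 ∧ γ u = 0 := by
  obtain ⟨v, hv, hv0⟩ : ∃ v, β v = 0 ∧ v ≠ 0 := by
    by_contra! h
    have hinj : Function.Injective β.toLinearMap := by
      rw [← LinearMap.ker_eq_bot, LinearMap.ker_eq_bot']
      exact h
    have := LinearMap.finrank_le_finrank_of_injective hinj
    rw [Module.finrank_self] at this
    omega
  obtain ⟨γ, hγ⟩ := SeparatingDual.exists_eq_one (R := ℂ) hv0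
  exact ⟨v, γ - γ u • β, hv, by simp [hv, hγ], by simp [hu]⟩

theorem exists_injective_avoiding_of_functional [ProperSpace E] (hE : 1 < Module.finrank ℂ E)
    {K : Set E} (hK : IsCompact K) (p : E) (β : E →L[ℂ] ℂ) (hβ : β ≠ 0)
    (hKp : ∀ z ∈ K, β z ≠ β p) :
    ∃ φ : E → E, Differentiable ℂ φ ∧ Function.Injective φ ∧ φ 0 = p ∧ ∀ z, φ z ∉ K := by
  obtain ⟨u, hu⟩ : ∃ u, β u = 1 := by
    obtain ⟨x, hx⟩ := DFunLike.ne_iff.1 hβ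
    exact ⟨(β x)⁻¹ • x, by simpa using inv_mul_cancel₀ hx⟩
  obtain ⟨v, γ, hv, hγv, hγu⟩ := exists_dual_pair hE hu
  obtain ⟨φ, hφ, hinj, hφ0, hφK⟩ := exists_injective_avoiding_of_alternating
    (hK.image (continuous_id.sub continuous_const : Continuous fun z => z - p))
    (fun k => if Even k then β else γ) (fun k => if Even k then u else v)
    (fun k => by by_cases h : Even k <;> simp [h, Nat.even_add_one, hv, hγu])
    (fun k => by by_cases h : Even k <;> simp [h, Nat.even_add_one, hu, hγv])
    (D := max ‖β‖ ‖γ‖) (fun k => by split_ifs <;> simp)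
    (by rintro _ ⟨z, hz, rfl⟩; simpa [sub_eq_zero] using hKp z hz)
  exact ⟨fun z => φ z + p, hφ.add_const p, fun z w h => hinj (add_right_cancel h), by simp [hφ0],
    fun z hz => hφK z ⟨_, hz, by simp⟩⟩

end PushOut

section Flow
open Filter Topology

variable {E : Type*} [NormedAddCommGroup E] [NormedSpace ℂ E]

variable (E) in
/-- The linear span of the powers of continuous linear functionals. -/
def linearPowerSpan : Submodule ℂ (E → ℂ) :=
  Submodule.span ℂ {g | ∃ (l : E →L[ℂ] ℂ) (d : ℕ), g = fun z => l z ^ d}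

theorem pow_mem_linearPowerSpan (l : E →L[ℂ] ℂ) (d : ℕ) :
    (fun z => l z ^ d) ∈ linearPowerSpan E := Submodule.subset_span ⟨l, d, rfl⟩

theorem mul_mem_linearPowerSpan (μ : E →L[ℂ] ℂ) {g : E → ℂ} (hg : g ∈ linearPowerSpan E) :
    (fun z => μ z * g z) ∈ linearPowerSpan E := by
  induction hg using Submodule.span_induction with
  | zero =>
    rw [show (fun z => μ z * (0 : E → ℂ) z) = 0 from funext fun z => mul_zero _]
    exact zero_mem _
  | add g g' _ _ h h' => simpa [mul_add] using! (linearPowerSpan E).add_mem h h'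
  | smul c g _ h => simpa [mul_left_comm] using! (linearPowerSpan E).smul_mem c h
  | mem g hg =>
    obtain ⟨l, d, rfl⟩ := hg
    by_contra hmem
    obtain ⟨ψ, hψ, hker⟩ := Submodule.exists_le_ker_of_notMem hmem
    let Q : Polynomial ℂ := ∑ k ∈ Finset.range (d + 1 + 1),
      Polynomial.C (ψ fun z => μ z ^ k * l z ^ (d + 1 - k) * ((d + 1).choose k : ℂ)) *
        Polynomial.X ^ k
    have hQ : Q = 0 := Polynomial.funext fun t => by
      have h : ψ (fun z => (t • μ + l) z ^ (d + 1)) = 0 :=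
        hker (pow_mem_linearPowerSpan (t • μ + l) (d + 1))
      have hsum : (fun z => (t • μ + l) z ^ (d + 1)) = ∑ k ∈ Finset.range (d + 1 + 1),
          t ^ k • fun z => μ z ^ k * l z ^ (d + 1 - k) * ((d + 1).choose k : ℂ) := by
        ext z
        simp [add_pow, mul_pow, mul_assoc]
      rw [hsum, map_sum] at h
      rw [Polynomial.eval_zero, ← h, Polynomial.eval_finsetSum]
      exact Finset.sum_congr rfl fun k _ => by
        rw [map_smul, Polynomial.eval_C_mul, Polynomial.eval_pow, Polynomial.eval_X,
          smul_eq_mul, mul_comm]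
    have hc : Q.coeff 1 = (d + 1) * ψ fun z => μ z * l z ^ d := by
      have hs : (fun z => μ z ^ 1 * l z ^ (d + 1 - 1) * ((d + 1).choose 1 : ℂ)) =
          ((d : ℂ) + 1) • fun z => μ z * l z ^ d := by
        ext z
        simp [mul_comm]
      simp only [Q, Polynomial.finsetSum_coeff, Polynomial.coeff_C_mul, Polynomial.coeff_X_pow]
      rw [Finset.sum_eq_single 1 (fun k _ hk => by simp [hk.symm]) (by simp), hs, map_smul]
      simp
    rw [hQ, Polynomial.coeff_zero, eq_comm, mul_eq_zero] at hc
    exact hc.elim (Nat.cast_add_one_ne_zero d) hψ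

theorem eval_mem_linearPowerSpan {n : ℕ} (f : MvPolynomial (Fin n) ℂ) :
    (fun z : EuclideanSpace ℂ (Fin n) => eval (fun i => z i) f) ∈
      linearPowerSpan (EuclideanSpace ℂ (Fin n)) := by
  induction f using MvPolynomial.induction_on with
  | C a =>
    convert! (linearPowerSpan (EuclideanSpace ℂ (Fin n))).smul_mem a
      (pow_mem_linearPowerSpan 0 0) using 1
    ext z
    simp
  | add f g hf hg => simpa using! (linearPowerSpan _).add_mem hf hg
  | mul_X f i hf =>
    convert! mul_mem_linearPowerSpan (EuclideanSpace.proj i) hf using 1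
    ext z
    simp [mul_comm]

theorem analyticOnNhd_of_mem_linearPowerSpan {g : E → ℂ} (hg : g ∈ linearPowerSpan E) :
    AnalyticOnNhd ℂ g univ := by
  induction hg using Submodule.span_induction with
  | zero => exact analyticOnNhd_const
  | add g g' _ _ h h' => exact h.add h'
  | smul c g _ h => exact (analyticOnNhd_const (v := c)).smul h
  | mem g hg =>
    obtain ⟨l, d, rfl⟩ := hg
    exact (l.analyticOnNhd univ).pow d

theorem differentiable_of_mem_linearPowerSpan {g : E → ℂ} (hg : g ∈ linearPowerSpan E) :
    Differentiable ℂ g := fun z =>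
  (analyticOnNhd_of_mem_linearPowerSpan hg z trivial).differentiableAt

/-- A locally Lipschitz vector field approximated to second order in time by biholomorphisms. -/
structure HasApproxFlow (X : E → E) : Prop where
  lipschitz : ∀ ρ : ℝ, ∃ C : ℝ, ∀ z w, ‖z‖ ≤ ρ → ‖w‖ ≤ ρ → ‖X z - X w‖ ≤ C * ‖z - w‖
  flow : ∃ A : ℂ → E ≃ E, (∀ t, IsBiholo (A t)) ∧ ∀ ρ : ℝ, ∃ C : ℝ, ∀ t z, ‖t‖ ≤ ρ → ‖z‖ ≤ ρ →
    ‖A t z - z - t • X z‖ ≤ C * ‖t‖ ^ 2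

theorem HasApproxFlow.exists_bound {X : E → E} (hX : HasApproxFlow X) (ρ : ℝ) :
    ∃ M : ℝ, 0 ≤ M ∧ ∀ z, ‖z‖ ≤ ρ → ‖X z‖ ≤ M := by
  obtain ⟨C, hC⟩ := hX.lipschitz (max ρ 0)
  refine ⟨|C| * max ρ 0 + ‖X 0‖, by positivity, fun z hz => ?_⟩
  have hz' : ‖z‖ ≤ max ρ 0 := hz.trans (le_max_left _ _)
  have h := hC z 0 hz' (by simp)
  have h2 := norm_le_insert' (X z) (X 0)
  rw [sub_zero] at h
  have h3 : C * ‖z‖ ≤ |C| * max ρ 0 := by gcongr; exact le_abs_self C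
  linarith

/-- Composing two approximate flows, with independent times. -/
theorem HasApproxFlow.exists_comp {X Y : E → E} (hX : HasApproxFlow X) (hY : HasApproxFlow Y) :
    ∃ A : ℂ → ℂ → E ≃ E, (∀ s t, IsBiholo (A s t)) ∧ ∀ ρ : ℝ, ∃ C : ℝ, 0 ≤ C ∧ ∀ s t z,
      ‖s‖ ≤ ρ → ‖t‖ ≤ ρ → ‖z‖ ≤ ρ →
        ‖A s t z - z - (s • X z + t • Y z)‖ ≤ C * (‖s‖ + ‖t‖) ^ 2 := by
  obtain ⟨A, hA, hAX⟩ := hX.flow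
  obtain ⟨B, hB, hBY⟩ := hY.flow
  refine ⟨fun s t => (B t).trans (A s), fun s t => (hB t).trans (hA s), fun ρ => ?_⟩
  obtain ⟨CB, hCB⟩ := hBY ρ
  obtain ⟨M, hM0, hM⟩ := hY.exists_bound ρ
  obtain ⟨CA, hCA⟩ := hAX (|ρ| + (|CB| * |ρ| + M) * |ρ|)
  obtain ⟨CL, hCL⟩ := hX.lipschitz (|ρ| + (|CB| * |ρ| + M) * |ρ|)
  refine ⟨|CA| + |CL| * (|CB| * |ρ| + M) + |CB|, by positivity, fun s t z hs ht hz => ?_⟩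
  have hρ := le_abs_self ρ
  have e1 : ‖B t z - z - t • Y z‖ ≤ |CB| * ‖t‖ ^ 2 :=
    (hCB t z ht hz).trans (by gcongr; exact le_abs_self CB)
  have e2 : ‖B t z - z‖ ≤ (|CB| * |ρ| + M) * ‖t‖ := by
    have h1 := norm_le_insert' (B t z - z) (t • Y z)
    have h2 : ‖t • Y z‖ ≤ M * ‖t‖ := by
      rw [norm_smul, mul_comm]
      exact mul_le_mul_of_nonneg_right (hM z hz) (norm_nonneg _)
    have h3 : |CB| * ‖t‖ ^ 2 ≤ |CB| * |ρ| * ‖t‖ := by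
      rw [sq, ← mul_assoc]
      gcongr
      exact ht.trans hρ
    linarith
  have hbig : 0 ≤ (|CB| * |ρ| + M) * |ρ| := by positivity
  have e3 : ‖B t z‖ ≤ |ρ| + (|CB| * |ρ| + M) * |ρ| := by
    have h1 := norm_le_insert' (B t z) z
    have h2 : (|CB| * |ρ| + M) * ‖t‖ ≤ (|CB| * |ρ| + M) * |ρ| := by gcongr; exact ht.trans hρ
    linarith
  have e4 : ‖A s (B t z) - B t z - s • X (B t z)‖ ≤ |CA| * ‖s‖ ^ 2 :=
    (hCA s _ (by linarith) e3).trans (by gcongr; exact le_abs_self CA)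
  have e5 : ‖s • X (B t z) - s • X z‖ ≤ |CL| * (|CB| * |ρ| + M) * (‖s‖ * ‖t‖) := by
    rw [← smul_sub, norm_smul]
    calc _ ≤ ‖s‖ * (|CL| * ((|CB| * |ρ| + M) * ‖t‖)) := by
          gcongr
          exact (hCL _ _ e3 (by linarith)).trans (by gcongr; exact le_abs_self CL)
      _ = _ := by ring
  have key : A s (B t z) - z - (s • X z + t • Y z) = (A s (B t z) - B t z - s • X (B t z)) +
      (s • X (B t z) - s • X z) + (B t z - z - t • Y z) := by abel
  have hs0 := norm_nonneg s
  have ht0 := norm_nonneg t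
  have hst : 0 ≤ ‖s‖ * ‖t‖ := by positivity
  change ‖A s (B t z) - z - (s • X z + t • Y z)‖ ≤ _
  rw [key]
  refine (norm_add₃_le ..).trans ((add_le_add_three e4 e5 e1).trans ?_)
  rw [add_mul, add_mul]
  gcongr <;> nlinarith

theorem HasApproxFlow.add {X Y : E → E} (hX : HasApproxFlow X) (hY : HasApproxFlow Y) :
    HasApproxFlow fun z => X z + Y z where
  lipschitz ρ := by
    obtain ⟨C, hC⟩ := hX.lipschitz ρ
    obtain ⟨C', hC'⟩ := hY.lipschitz ρ
    refine ⟨C + C', fun z w hz hw => ?_⟩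
    rw [add_sub_add_comm, add_mul]
    exact norm_add_le_of_le (hC z w hz hw) (hC' z w hz hw)
  flow := by
    obtain ⟨A, hA, hAX⟩ := hX.exists_comp hY
    refine ⟨fun t => A t t, fun t => hA t t, fun ρ => ?_⟩
    obtain ⟨C, -, hC⟩ := hAX ρ
    refine ⟨C * 4, fun t z ht hz => ?_⟩
    have := hC t t z ht ht hz
    rw [smul_add]
    exact this.trans_eq (by ring)

theorem HasApproxFlow.const_smul {X : E → E} (hX : HasApproxFlow X) (c : ℂ) :
    HasApproxFlow fun z => c • X z where
  lipschitz ρ := by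
    obtain ⟨C, hC⟩ := hX.lipschitz ρ
    refine ⟨‖c‖ * C, fun z w hz hw => ?_⟩
    rw [← smul_sub, norm_smul, mul_assoc]
    gcongr
    exact hC z w hz hw
  flow := by
    obtain ⟨A, hA, hAX⟩ := hX.flow
    refine ⟨fun t => A (t * c), fun t => hA _, fun ρ => ?_⟩
    obtain ⟨C, hC⟩ := hAX (max ρ (ρ * ‖c‖))
    refine ⟨C * ‖c‖ ^ 2, fun t z ht hz => ?_⟩
    have := hC (t * c) z ((norm_mul t c).trans_le (le_max_of_le_right (by gcongr)))
      (le_max_of_le_left hz)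
    rw [smul_smul]
    exact this.trans_eq (by rw [norm_mul]; ring)

/-- The divergence-free vector field in the plane of `a` and `b` with Hamiltonian `g`. -/
def hamiltonianField (a b : E) (g : E → ℂ) (z : E) : E :=
  fderiv ℂ g z b • a - fderiv ℂ g z a • b

theorem hasApproxFlow_shear [ProperSpace E] {h : ℂ → ℂ} (hh : ContDiff ℂ 1 h) (l : E →L[ℂ] ℂ)
    (v : E) (hv : l v = 0) : HasApproxFlow fun z => h (l z) • v where
  lipschitz ρ := by
    have hcd : ContDiff ℂ 1 fun z => h (l z) • v := (hh.comp l.contDiff).smul contDiff_const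
    obtain ⟨C, hC⟩ := (hcd.locallyLipschitz.locallyLipschitzOn
      (s := closedBall (0 : E) ρ)).exists_lipschitzOnWith_of_compact (isCompact_closedBall _ _)
    exact ⟨C, fun z w hz hw => hC.norm_sub_le (by simpa using hz) (by simpa using hw)⟩
  flow := ⟨fun t => shear (fun w => t * h w) l v hv,
    fun t => isBiholo_shear ((hh.differentiable one_ne_zero).const_mul t) l v hv,
    fun ρ => ⟨0, fun t z _ _ => by simp [shear, mul_smul]⟩⟩

theorem hasApproxFlow_hamiltonianField [ProperSpace E] (a b : E) {g : E → ℂ}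
    (hg : g ∈ linearPowerSpan E) : HasApproxFlow (hamiltonianField a b g) := by
  induction hg using Submodule.span_induction with
  | zero =>
    convert! hasApproxFlow_shear (h := 0) contDiff_const (0 : E →L[ℂ] ℂ) 0 (map_zero _) using 1
    ext z
    simp [hamiltonianField]
  | add g g' hg hg' h h' =>
    convert! h.add h' using 1
    ext z
    have hd := differentiable_of_mem_linearPowerSpan hg z
    have hd' := differentiable_of_mem_linearPowerSpan hg' z
    simp only [hamiltonianField, fderiv_add hd hd', add_apply, add_smul]
    abel
  | smul c g hg h =>
    convert! h.const_smul c using 1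
    ext z
    simp only [hamiltonianField, fderiv_const_smul (differentiable_of_mem_linearPowerSpan hg z) c,
      smul_apply, smul_sub, smul_assoc]
  | mem g hg =>
    obtain ⟨l, d, rfl⟩ := hg
    convert! hasApproxFlow_shear (h := fun w => d * w ^ (d - 1)) (by fun_prop) l
      (l b • a - l a • b) (by simp [mul_comm]) using 1
    ext z
    have hd : fderiv ℂ (fun z => l z ^ d) z = (d * l z ^ (d - 1)) • (l : E →L[ℂ] ℂ) :=
      (l.hasFDerivAt.pow d).fderiv.trans (by simp)
    simp [hamiltonianField, hd, smul_sub, smul_smul]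

end Flow

section Transport
open Filter Topology

variable {E : Type*} [NormedAddCommGroup E] [NormedSpace ℂ E]

theorem hamiltonianField_pow_combination {f : E → ℂ} (hf : Differentiable ℂ f) {a b : E}
    {β : E →L[ℂ] ℂ} (ha : β a = 0) (hb : β b = 1) (m : ℕ) (α : ℂ) (w z : E) :
    α • hamiltonianField a b (fun z => β z * f z ^ (m + 1)) z +
      (-(α * β w)) • hamiltonianField a b (fun z => f z ^ (m + 1)) z =
    (α * f z ^ m) • (f z • a + ((β z - β w) * (m + 1)) • hamiltonianField a b f z) := by
  have h2 : HasFDerivAt (fun z => f z ^ (m + 1)) (((m + 1 : ℕ) * f z ^ m) • fderiv ℂ f z) z := by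
    simpa using (hf z).hasFDerivAt.pow (m + 1)
  have h1 : HasFDerivAt (fun z => β z * f z ^ (m + 1))
      (β z • ((m + 1 : ℕ) * f z ^ m) • fderiv ℂ f z + f z ^ (m + 1) • β) z :=
    β.hasFDerivAt.mul h2
  simp only [hamiltonianField, h2.fderiv, h1.fderiv, add_apply, smul_apply, ha, hb, smul_eq_mul]
  push_cast
  match_scalars <;> ring

/-- A biholomorphism close to the identity that moves a point `w` by `t • v`, up to `O(t ^ 2)`, and
points of a compact set on which `f` is smaller by at most `t * ε`, up to `O(t ^ 2)`. -/
theorem exists_small_step [ProperSpace E] (hE : 1 < Module.finrank ℂ E) {f : E → ℂ}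
    (hf : ∀ N : ℕ, (fun z => f z ^ N) ∈ linearPowerSpan E) {c : ℝ} (hc : 0 < c) {q : E} {r : ℝ}
    (hq : ∀ z ∈ closedBall q r, c ≤ ‖f z‖) (v : E) {L : Set E} (hL : IsCompact L)
    (hLf : ∀ z ∈ L, ‖f z‖ < c) {ε : ℝ} (hε : 0 < ε) :
    ∃ C : ℝ, 0 ≤ C ∧ ∀ t : ℝ, 0 ≤ t → t ≤ 1 → ∀ w ∈ closedBall q r, ∃ S : E ≃ E, IsBiholo S ∧
      ‖S w - w - (t : ℂ) • v‖ ≤ C * t ^ 2 ∧ ∀ z ∈ L, ‖S z - z‖ ≤ t * ε + C * t ^ 2 := by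
  rcases eq_or_ne v 0 with rfl | hv
  · exact ⟨0, le_rfl, fun t ht _ w _ => ⟨Equiv.refl E, IsBiholo.refl, by simp,
      fun z _ => by simpa using by positivity⟩⟩
  obtain ⟨γ, hγ⟩ := SeparatingDual.exists_eq_one (R := ℂ) hv
  obtain ⟨b, β, -, hb, ha⟩ := exists_dual_pair hE hγ
  have hf1 : f ∈ linearPowerSpan E := by simpa using hf 1
  have hfd := differentiable_of_mem_linearPowerSpan hf1
  obtain ⟨θ, hθ0, hθ1, hθ⟩ : ∃ θ : ℝ, 0 ≤ θ ∧ θ < 1 ∧ ∀ z ∈ L, ‖f z‖ ≤ θ * c := by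
    rcases L.eq_empty_or_nonempty with rfl | hne
    · exact ⟨0, le_rfl, one_pos, by simp⟩
    obtain ⟨x, hx, hmax⟩ := hL.exists_isMaxOn hne hfd.continuous.norm.continuousOn
    exact ⟨‖f x‖ / c, by positivity, (div_lt_one hc).2 (hLf x hx), fun z hz => by
      rw [div_mul_cancel₀ _ hc.ne']; exact hmax hz⟩
  obtain ⟨ρ, hρ⟩ := (hL.isBounded.union (isBounded_closedBall (x := q) (r := r))).exists_norm_le
  obtain ⟨J, hJ0, hJ⟩ := (hasApproxFlow_hamiltonianField v b hf1).exists_bound ρ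
  obtain ⟨m, hm⟩ : ∃ m : ℕ,
      θ ^ m / c * (c * ‖v‖ + (‖β‖ * ρ + ‖β‖ * ρ) * (m + 1) * J) < ε := by
    have h1 := tendsto_pow_atTop_nhds_zero_of_lt_one hθ0 hθ1
    have h2 := tendsto_self_mul_const_pow_of_lt_one hθ0 hθ1
    have h3 := (h1.const_mul (‖v‖ + (‖β‖ * ρ + ‖β‖ * ρ) * J / c)).add
      (h2.const_mul ((‖β‖ * ρ + ‖β‖ * ρ) * J / c))
    rw [mul_zero, mul_zero, add_zero] at h3
    obtain ⟨m, hm⟩ := (h3.eventually (gt_mem_nhds hε)).exists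
    refine ⟨m, lt_of_eq_of_lt ?_ hm⟩
    field_simp
    ring
  obtain ⟨A, hA, hAX⟩ := (hasApproxFlow_hamiltonianField v b
    (mul_mem_linearPowerSpan β (hf (m + 1)))).exists_comp
      (hasApproxFlow_hamiltonianField v b (hf (m + 1)))
  obtain ⟨C, hC0, hC⟩ := hAX (max ρ (max (c⁻¹ ^ (m + 1)) (c⁻¹ ^ (m + 1) * (‖β‖ * ρ))))
  refine ⟨C * (c⁻¹ ^ (m + 1) + c⁻¹ ^ (m + 1) * (‖β‖ * ρ)) ^ 2, by positivity,
    fun t ht0 ht1 w hw => ?_⟩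
  have hfw : f w ≠ 0 := norm_pos_iff.1 (hc.trans_le (hq w hw))
  have hβρ : ∀ z, ‖z‖ ≤ ρ → ‖β z‖ ≤ ‖β‖ * ρ := fun z hz => (β.le_opNorm z).trans (by gcongr)
  have hwρ : ‖w‖ ≤ ρ := hρ w (Or.inr hw)
  have hρ0 : 0 ≤ ρ := (norm_nonneg _).trans hwρ
  set α : ℂ := (f w)⁻¹ ^ (m + 1) with hα
  have hαc : ‖α‖ ≤ c⁻¹ ^ (m + 1) := by
    rw [hα, norm_pow, norm_inv]
    gcongr
    exact hq w hw
  have htn : ‖(t : ℂ)‖ = t := by simp [ht0]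
  have hs1 : ‖(t : ℂ) * α‖ ≤ t * c⁻¹ ^ (m + 1) := by
    rw [norm_mul, htn]; gcongr
  have hs2 : ‖(t : ℂ) * -(α * β w)‖ ≤ t * (c⁻¹ ^ (m + 1) * (‖β‖ * ρ)) := by
    rw [norm_mul, htn, norm_neg, norm_mul]
    gcongr
    exact hβρ w hwρ
  set X : E → E := fun z =>
    (α * f z ^ m) • (f z • v + ((β z - β w) * (m + 1)) • hamiltonianField v b f z) with hX
  have happrox : ∀ z, ‖z‖ ≤ ρ → ‖A (t * α) (t * -(α * β w)) z - z - (t : ℂ) • X z‖ ≤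
      C * (c⁻¹ ^ (m + 1) + c⁻¹ ^ (m + 1) * (‖β‖ * ρ)) ^ 2 * t ^ 2 := by
    intro z hz
    have h := hC (t * α) (t * -(α * β w)) z
      (hs1.trans (le_max_of_le_right (le_max_of_le_left
        (mul_le_of_le_one_left (by positivity) ht1))))
      (hs2.trans (le_max_of_le_right (le_max_of_le_right
        (mul_le_of_le_one_left (by positivity) ht1))))
      (le_max_of_le_left hz)
    rw [mul_smul, mul_smul, ← smul_add, hamiltonianField_pow_combination hfd ha hb] at h
    refine h.trans ?_
    calc _ ≤ C * (t * c⁻¹ ^ (m + 1) + t * (c⁻¹ ^ (m + 1) * (‖β‖ * ρ))) ^ 2 := by gcongr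
      _ = _ := by ring
  refine ⟨A (t * α) (t * -(α * β w)), hA _ _, ?_, fun z hz => ?_⟩
  · have hXw : X w = v := by
      simp only [hX, sub_self, zero_mul, zero_smul, add_zero, smul_smul, hα]
      rw [mul_assoc, ← pow_succ, ← mul_pow, inv_mul_cancel₀ hfw, one_pow, one_smul]
    simpa only [hXw] using happrox w hwρ
  · have hzρ : ‖z‖ ≤ ρ := hρ z (Or.inl hz)
    have hXz : ‖X z‖ ≤ ε := by
      have h1 : ‖α * f z ^ m‖ ≤ θ ^ m / c := by
        rw [norm_mul, norm_pow (f z)]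
        calc ‖α‖ * ‖f z‖ ^ m ≤ c⁻¹ ^ (m + 1) * (θ * c) ^ m :=
              mul_le_mul hαc (pow_le_pow_left₀ (norm_nonneg _) (hθ z hz) m) (by positivity)
                (by positivity)
          _ = θ ^ m / c := by rw [mul_pow, pow_succ, inv_pow]; field_simp
      have h2 : ‖f z • v‖ ≤ c * ‖v‖ := by
        rw [norm_smul]; gcongr; exact (hLf z hz).le
      have h3 : ‖((β z - β w) * (m + 1)) • hamiltonianField v b f z‖ ≤
          (‖β‖ * ρ + ‖β‖ * ρ) * (m + 1) * J := by
        have hm1 : ‖((m : ℂ) + 1)‖ = m + 1 := by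
          rw [← Nat.cast_add_one, Complex.norm_natCast]; push_cast; rfl
        rw [norm_smul, norm_mul, hm1]
        gcongr
        · exact norm_sub_le_of_le (hβρ z hzρ) (hβρ w hwρ)
        · exact hJ z hzρ
      refine le_trans ?_ hm.le
      rw [hX, norm_smul]
      gcongr
      exact norm_add_le_of_le h2 h3
    have h1 := happrox z hzρ
    have h2 := norm_le_insert' (A (t * α) (t * -(α * β w)) z - z) ((t : ℂ) • X z)
    have h3 : ‖(t : ℂ) • X z‖ ≤ t * ε := by rw [norm_smul, htn]; gcongr
    linarith

/-- Iterating small steps: a point can be moved along a segment on which `f` is large, almost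
fixing a compact set on which `f` is small. -/
theorem exists_biholo_moving_along_segment [ProperSpace E] (hE : 1 < Module.finrank ℂ E)
    {f : E → ℂ} (hf : ∀ N : ℕ, (fun z => f z ^ N) ∈ linearPowerSpan E) {c : ℝ} (hc : 0 < c)
    {q : E} {r : ℝ} (hq : ∀ z ∈ closedBall q r, c ≤ ‖f z‖) {v : E} (hv : ‖v‖ < r) {L : Set E}
    (hL : IsCompact L) (hLf : ∀ z ∈ L, ‖f z‖ < c) {η : ℝ} (hη : 0 < η) :
    ∃ A : E ≃ E, IsBiholo A ∧ ‖A q - (q + v)‖ < η ∧ ∀ z ∈ L, ‖A z - z‖ < η := by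
  have hfd : Continuous f :=
    (differentiable_of_mem_linearPowerSpan (by simpa using hf 1)).continuous
  obtain ⟨δ, hδ, hLδ⟩ := hL.exists_cthickening_subset_open
    (isOpen_lt hfd.norm continuous_const) (fun z hz => hLf z hz)
  obtain ⟨η', hη'0, hη'η, hη'δ⟩ : ∃ η', 0 < η' ∧ η' < η ∧ η' ≤ δ :=
    ⟨min (η / 2) δ, by positivity, (min_le_left _ _).trans_lt (by linarith), min_le_right _ _⟩
  obtain ⟨C, hC0, hstep⟩ := exists_small_step hE hf hc hq v (hL.cthickening (r := δ))
    (fun z hz => hLδ hz) (half_pos hη'0)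
  obtain ⟨M, hM⟩ := exists_nat_gt (max (C / (η' / 2)) (C / (r - ‖v‖)))
  have hr : 0 < r - ‖v‖ := sub_pos.2 hv
  have hM0 : (0 : ℝ) < M := lt_of_le_of_lt (le_max_of_le_left (by positivity)) hM
  have hM1 : C / M ≤ η' / 2 := by
    rw [div_le_iff₀ hM0, ← div_le_iff₀' (by positivity)]
    exact (le_max_left _ _).trans hM.le
  have hM2 : C / M ≤ r - ‖v‖ := by
    rw [div_le_iff₀ hM0, ← div_le_iff₀' hr]
    exact (le_max_right _ _).trans hM.le
  have hMnat : 1 ≤ M := by exact_mod_cast hM0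
  have hsmall : ∀ k : ℕ, k ≤ M → k * (C / M ^ 2) ≤ C / M := fun k hk => by
    calc (k : ℝ) * (C / M ^ 2) ≤ M * (C / M ^ 2) := by gcongr
      _ = _ := by field_simp
  have hdisp : ∀ k : ℕ, k ≤ M → k * (η' / 2 / M + C / M ^ 2) ≤ η' := fun k hk => by
    have h1 : (k : ℝ) * (η' / 2 / M) ≤ η' / 2 := by
      calc (k : ℝ) * (η' / 2 / M) ≤ M * (η' / 2 / M) := by gcongr
        _ = _ := by field_simp
    linarith [hsmall k hk, mul_add (k : ℝ) (η' / 2 / M) (C / M ^ 2)]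
  have hiter : ∀ k : ℕ, k ≤ M → ∃ A : E ≃ E, IsBiholo A ∧
      ‖A q - (q + ((k / M : ℝ) : ℂ) • v)‖ ≤ k * (C / M ^ 2) ∧
      ∀ z ∈ L, ‖A z - z‖ ≤ k * (η' / 2 / M + C / M ^ 2) := by
    intro k
    induction k with
    | zero => exact fun _ => ⟨Equiv.refl E, IsBiholo.refl, by simp, by simp⟩
    | succ k ih =>
      intro hk
      obtain ⟨A, hA, hAq, hAL⟩ := ih (by omega)
      have hkM : ‖((k / M : ℝ) : ℂ) • v‖ ≤ ‖v‖ := by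
        rw [norm_smul, Complex.norm_real, Real.norm_of_nonneg (by positivity)]
        exact mul_le_of_le_one_left (norm_nonneg _)
          ((div_le_one hM0).2 (by exact_mod_cast (by omega : k ≤ M)))
      have hAball : A q ∈ closedBall q r := by
        rw [mem_closedBall_iff_norm]
        have h1 : A q - q = (A q - (q + ((k / M : ℝ) : ℂ) • v)) + ((k / M : ℝ) : ℂ) • v := by abel
        rw [h1]
        have := norm_add_le_of_le (hAq.trans (hsmall k (by omega))) hkM
        linarith
      obtain ⟨S, hS, hSq, hSL⟩ := hstep (1 / M) (by positivity)
        ((div_le_one hM0).2 (by exact_mod_cast hMnat)) (A q) hAball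
      refine ⟨A.trans S, hA.trans hS, ?_, fun z hz => ?_⟩
      · have h1 : (A.trans S) q - (q + (((k + 1 : ℕ) / M : ℝ) : ℂ) • v) =
            (S (A q) - A q - ((1 / M : ℝ) : ℂ) • v) + (A q - (q + ((k / M : ℝ) : ℂ) • v)) := by
          rw [Equiv.trans_apply]
          push_cast
          module
        rw [h1]
        refine (norm_add_le_of_le hSq hAq).trans_eq ?_
        push_cast
        ring
      · have hmem : A z ∈ cthickening δ L := mem_cthickening_of_dist_le _ z _ _ hz (by
          rw [dist_eq_norm]
          exact (hAL z hz).trans ((hdisp k (by omega)).trans hη'δ))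
        refine (norm_sub_le_norm_sub_add_norm_sub _ (A z) _).trans
          ((add_le_add (hSL _ hmem) (hAL z hz)).trans_eq ?_)
        push_cast
        ring
  obtain ⟨A, hA, hAq, hAL⟩ := hiter M le_rfl
  refine ⟨A, hA, ?_, fun z hz => ((hAL z hz).trans (hdisp M le_rfl)).trans_lt hη'η⟩
  rw [div_self hM0.ne', Complex.ofReal_one, one_smul] at hAq
  linarith [hsmall M le_rfl]

theorem exists_biholo_moving_far [ProperSpace E] (hE : 1 < Module.finrank ℂ E)
    {f : E → ℂ} (hf : ∀ N : ℕ, (fun z => f z ^ N) ∈ linearPowerSpan E) {c : ℝ}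
    {K : Set E} (hK : IsCompact K) (hne : K.Nonempty) (hKf : ∀ z ∈ K, ‖f z‖ < c) {p : E}
    (hp : c < ‖f p‖) (R : ℝ) :
    ∃ A : E ≃ E, IsBiholo A ∧ R < ‖A p‖ ∧ ∀ z ∈ K, ‖A z - z‖ < 1 := by
  have hc : 0 < c := (norm_nonneg _).trans_lt (hKf _ hne.some_mem)
  have hf1 : f ∈ linearPowerSpan E := by simpa using hf 1
  have hfd := differentiable_of_mem_linearPowerSpan hf1
  let S : Set E := {q | ∀ L : Set E, IsCompact L → (∀ z ∈ L, ‖f z‖ < c) → ∀ η > 0,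
    ∃ A : E ≃ E, IsBiholo A ∧ ‖A p - q‖ < η ∧ ∀ z ∈ L, ‖A z - z‖ < η}
  have hpS : p ∈ S := fun L _ _ η hη => ⟨Equiv.refl E, IsBiholo.refl, by simpa,
    fun z _ => by simpa⟩
  have hSclosed : IsClosed S := by
    refine isClosed_of_closure_subset fun q hq L hL hLf η hη => ?_
    obtain ⟨q', hq', hdist⟩ := Metric.mem_closure_iff.1 hq (η / 2) (half_pos hη)
    obtain ⟨A, hA, hAp, hAL⟩ := hq' L hL hLf (η / 2) (half_pos hη)
    rw [dist_comm, dist_eq_norm] at hdist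
    exact ⟨A, hA, by linarith [norm_sub_le_norm_sub_add_norm_sub (A p) q' q],
      fun z hz => (hAL z hz).trans (half_lt_self hη)⟩
  have hSopen : ∀ q ∈ S, c < ‖f q‖ → S ∈ 𝓝 q := by
    intro q hq hcq
    obtain ⟨r, hr, hball⟩ := Metric.nhds_basis_closedBall.mem_iff.1
      ((isOpen_lt continuous_const hfd.continuous.norm).mem_nhds hcq)
    refine Filter.mem_of_superset (ball_mem_nhds q hr) fun q' hq' L hL hLf η hη => ?_
    obtain ⟨δ, hδ, hLδ⟩ := hL.exists_cthickening_subset_open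
      (isOpen_lt hfd.continuous.norm continuous_const) (fun z hz => hLf z hz)
    obtain ⟨B, hB, hBq, hBL⟩ := exists_biholo_moving_along_segment hE hf hc
      (fun z hz => (hball hz).le) (v := q' - q) (mem_ball_iff_norm.1 hq')
      (hL.cthickening (r := δ)) (fun z hz => hLδ hz) (half_pos hη)
    rw [add_sub_cancel] at hBq
    obtain ⟨τ, hτ, hBτ⟩ := Metric.continuousAt_iff.1 (hB.1.continuous.continuousAt (x := q))
      (η / 2) (half_pos hη)
    obtain ⟨A, hA, hAp, hAL⟩ := hq L hL hLf (min τ (min δ (η / 2))) (by positivity)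
    refine ⟨A.trans B, hA.trans hB, ?_, fun z hz => ?_⟩
    · have h1 := hBτ (x := A p) (by rw [dist_eq_norm]; exact hAp.trans_le (min_le_left _ _))
      rw [dist_eq_norm] at h1
      have h2 := norm_sub_le_norm_sub_add_norm_sub (B (A p)) (B q) q'
      rw [Equiv.trans_apply]
      linarith
    · have h1 := hAL z hz
      have h2 := hBL (A z) (mem_cthickening_of_dist_le _ z _ _ hz (by
        rw [dist_eq_norm]; exact h1.le.trans ((min_le_right _ _).trans (min_le_left _ _))))
      have h3 := norm_sub_le_norm_sub_add_norm_sub (B (A z)) (A z) z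
      have h4 := h1.trans_le ((min_le_right _ _).trans (min_le_right _ _))
      rw [Equiv.trans_apply]
      linarith
  obtain ⟨q, hq, hRq⟩ : ∃ q ∈ S, R + 1 < ‖q‖ := by
    by_contra! hbdd
    have hcompact : IsCompact S := (isCompact_closedBall (0 : E) (R + 1)).of_isClosed_subset
      hSclosed fun q hq => by simpa using hbdd q hq
    obtain ⟨x, hx, hmax⟩ := hcompact.exists_isMaxOn ⟨p, hpS⟩ hfd.continuous.norm.continuousOn
    have hloc : IsLocalMax (norm ∘ f) x :=
      hmax.isLocalMax (hSopen x hx (hp.trans_le (hmax hpS)))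
    have hev := Complex.eventually_eq_of_isLocalMax_norm
      (Eventually.of_forall fun z => hfd z) hloc
    have heq := (analyticOnNhd_of_mem_linearPowerSpan hf1).eq_of_eventuallyEq
      (analyticOnNhd_const (v := f x)) hev
    obtain ⟨k, hk⟩ := hne
    have h1 := hKf k hk
    have h2 : ‖f p‖ ≤ ‖f x‖ := hmax hpS
    rw [heq] at h1
    linarith
  obtain ⟨A, hA, hAp, hAK⟩ := hq K hK hKf 1 one_pos
  refine ⟨A, hA, ?_, hAK⟩
  have := norm_le_insert' q (A p)
  rw [norm_sub_rev] at this
  linarith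

end Transport

/-- For any `n > 1`, any compact polynomially convex set `K ⊆ ℂⁿ`, and any point
`p ∈ ℂⁿ \ K`, there exists an injective holomorphic map `φ : ℂⁿ → ℂⁿ` with `φ(0) = p` whose
image is disjoint from `K`; hence `p` lies in a Fatou–Bieberbach domain contained in `ℂⁿ \ K`. -/
theorem stmt_10 (n : ℕ) (hn : 1 < n) (K : Set (EuclideanSpace ℂ (Fin n)))
    (hKc : IsCompact K) (hKpc : IsPolyConvex K) (p : EuclideanSpace ℂ (Fin n)) (hp : p ∉ K) :
    ∃ φ : EuclideanSpace ℂ (Fin n) → EuclideanSpace ℂ (Fin n),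
      Differentiable ℂ φ ∧ Function.Injective φ ∧ φ 0 = p ∧
        ∀ ζ, φ ζ ∉ K := by
  rcases K.eq_empty_or_nonempty with rfl | hne
  · exact ⟨fun z => z + p, differentiable_id.add_const p, add_left_injective p, zero_add p,
      fun _ => notMem_empty _⟩
  have hE : 1 < Module.finrank ℂ (EuclideanSpace ℂ (Fin n)) := by simpa using hn
  rw [← hKpc] at hp
  obtain ⟨g, hg⟩ : ∃ g : MvPolynomial (Fin n) ℂ,
      sSup ((fun w : EuclideanSpace ℂ (Fin n) => ‖eval (fun i => w i) g‖) '' K) <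
        ‖eval (fun i => p i) g‖ := by
    simpa [polyHull] using hp
  obtain ⟨c, hc1, hc2⟩ := exists_between hg
  have hf : ∀ N : ℕ, (fun z : EuclideanSpace ℂ (Fin n) => eval (fun i => z i) g ^ N) ∈
      linearPowerSpan (EuclideanSpace ℂ (Fin n)) := fun N => by
    simpa using eval_mem_linearPowerSpan (g ^ N)
  have hcont : Continuous fun z : EuclideanSpace ℂ (Fin n) => ‖eval (fun i => z i) g‖ :=
    (differentiable_of_mem_linearPowerSpan (eval_mem_linearPowerSpan g)).continuous.norm
  have hKf : ∀ z ∈ K, ‖eval (fun i => z i) g‖ < c := fun z hz =>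
    (le_csSup (hKc.image hcont).bddAbove (mem_image_of_mem _ hz)).trans_lt hc1
  obtain ⟨R, hR⟩ := hKc.isBounded.exists_norm_le
  obtain ⟨A, hA, hAp, hAK⟩ := exists_biholo_moving_far hE hf hKc hne hKf hc2 (R + 1)
  have hR0 : 0 ≤ R := (norm_nonneg _).trans (hR _ hne.some_mem)
  have hAR : ∀ z ∈ K, ‖A z‖ < ‖A p‖ := fun z hz => by
    linarith [norm_le_insert' (A z) z, hAK z hz, hR z hz]
  have hAp0 : 0 < ‖A p‖ := by linarith
  have hinner : ∀ z ∈ K, innerSL ℂ (A p) (A z) ≠ innerSL ℂ (A p) (A p) := fun z hz h => by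
    have h1 := norm_inner_le_norm (𝕜 := ℂ) (A p) (A z)
    rw [innerSL_apply_apply, innerSL_apply_apply, inner_self_eq_norm_sq_to_K] at h
    rw [h] at h1
    simp only [norm_pow, RCLike.norm_ofReal, abs_norm] at h1
    nlinarith [hAR z hz]
  obtain ⟨φ, hφ, hinj, hφ0, hφK⟩ := exists_injective_avoiding_of_functional hE
    (hKc.image hA.1.continuous) (A p) (innerSL ℂ (A p))
    (norm_pos_iff.1 (by rwa [innerSL_apply_norm]))
    (by rintro _ ⟨z, hz, rfl⟩; exact hinner z hz)
  exact ⟨A.symm ∘ φ, hA.2.comp hφ, A.symm.injective.comp hinj, by simp [hφ0],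
    fun ζ hζ => hφK ζ ⟨_, hζ, by simp⟩⟩
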